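/- Core inequality behind the FRWD triangle inequality: let (E_ℓ, d_ℓ), ℓ = 1,…,L, be metric spaces, p ≥ 1 real, and let x_1,…,x_n, y_1,…,y_m, z_1,…,z_u be points of ∏_ℓ E_ℓ. Let a ∈ ℝ^n, b ∈ ℝ^m, c ∈ ℝ^u have nonnegative entries, let P ∈ U(a,b), Q ∈ U(b,c), set b̃_j = b_j if b_j > 0 and b̃_j = 1 otherwise, and let S_{ik} = ∑_j P_{ij} Q_{jk} / b̃_j. Then for every α in the probability simplex Σ^L: (∑_{ℓ} α_ℓ ∑_{i,k} S_{ik} d_ℓ(x_i(ℓ), z_k(ℓ))^p)^{1/p} ≤ (∑_{ℓ} α_ℓ ∑_{i,j} P_{ij} d_ℓ(x_i(ℓ), y_j(ℓ))^p)^{1/p} + (∑_{ℓ} α_ℓ ∑_{j,k} Q_{jk} d_ℓ(y_j(ℓ), z_k(ℓ))^p)^{1/p}. -/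

import Mathlib

open scoped BigOperators

/-- The transport polytope `U(a,b)` of couplings between weight vectors `a` and `b`. -/
def transportPolytope {n m : ℕ} (a : Fin n → ℝ) (b : Fin m → ℝ) :
    Set (Fin n → Fin m → ℝ) :=
  {P | (∀ i j, 0 ≤ P i j) ∧ (∀ i, ∑ j, P i j = a i) ∧ (∀ j, ∑ i, P i j = b j)}

/-- **Minkowski inequality** for finite weighted sums. -/
theorem weighted_Lp_add_le {ι : Type*} (s : Finset ι) {w f g : ι → ℝ} {p : ℝ} (hp : 1 ≤ p)
    (hw : ∀ i, 0 ≤ w i) (hf : ∀ i, 0 ≤ f i) (hg : ∀ i, 0 ≤ g i) :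
    (∑ i ∈ s, w i * (f i + g i) ^ p) ^ (1 / p) ≤
      (∑ i ∈ s, w i * f i ^ p) ^ (1 / p) + (∑ i ∈ s, w i * g i ^ p) ^ (1 / p) := by
  have hp0 : p ≠ 0 := by positivity
  have hroot (i : ι) : 0 ≤ w i ^ (1 / p) := Real.rpow_nonneg (hw i) _
  have hpow (i : ι) {t : ℝ} (ht : 0 ≤ t) : (w i ^ (1 / p) * t) ^ p = w i * t ^ p := by
    rw [Real.mul_rpow (hroot i) ht, ← Real.rpow_mul (hw i), one_div_mul_cancel hp0,
      Real.rpow_one]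
  have h := Real.Lp_add_le_of_nonneg s hp
    (fun i _ => mul_nonneg (hroot i) (hf i)) (fun i _ => mul_nonneg (hroot i) (hg i))
  simpa only [← mul_add, hpow _ (hf _), hpow _ (hg _), hpow _ (add_nonneg (hf _) (hg _))] using h

/-- Rescaling by `r / b̃` does nothing to an entry `t` dominated by `r`, where `b̃` is `r` if
`r` is positive and `1` otherwise. -/
theorem mul_div_ite_pos_eq_self {t r : ℝ} (ht : 0 ≤ t) (htr : t ≤ r) :
    t * r / (if 0 < r then r else 1) = t := by
  split_ifs with h
  · exact mul_div_cancel_right₀ t h.ne'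
  · obtain rfl : t = 0 := le_antisymm (htr.trans (not_lt.mp h)) ht
    simp

/-- core inequality behind the FRWD triangle inequality — for the glued
plan `S = P diag(1/b̃) Q` and any `α` in the probability simplex, the weighted
`p`-transport cost from `x` to `z` along `S` is bounded by the sum of the costs
from `x` to `y` along `P` and from `y` to `z` along `Q`. -/
theorem frwd_core_inequality (L : ℕ) (E : Fin L → Type*) [∀ ℓ, MetricSpace (E ℓ)]
    (p : ℝ) (hp : 1 ≤ p) (n m u : ℕ)
    (x : Fin n → ∀ ℓ, E ℓ) (y : Fin m → ∀ ℓ, E ℓ) (z : Fin u → ∀ ℓ, E ℓ)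
    (a : Fin n → ℝ) (b : Fin m → ℝ) (c : Fin u → ℝ)
    (ha : ∀ i, 0 ≤ a i) (hb : ∀ j, 0 ≤ b j) (hc : ∀ k, 0 ≤ c k)
    (P : Fin n → Fin m → ℝ) (Q : Fin m → Fin u → ℝ)
    (hP : P ∈ transportPolytope a b) (hQ : Q ∈ transportPolytope b c)
    (btilde : Fin m → ℝ) (hbt : ∀ j, btilde j = if 0 < b j then b j else 1)
    (S : Fin n → Fin u → ℝ)
    (hS : ∀ i k, S i k = ∑ j, P i j * Q j k / btilde j)
    (α : Fin L → ℝ) (hα : (∀ ℓ, 0 ≤ α ℓ) ∧ ∑ ℓ, α ℓ = 1) :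
    (∑ ℓ, α ℓ * ∑ i, ∑ k, S i k * dist (x i ℓ) (z k ℓ) ^ p) ^ (1 / p) ≤
      (∑ ℓ, α ℓ * ∑ i, ∑ j, P i j * dist (x i ℓ) (y j ℓ) ^ p) ^ (1 / p) +
      (∑ ℓ, α ℓ * ∑ j, ∑ k, Q j k * dist (y j ℓ) (z k ℓ) ^ p) ^ (1 / p) := by
  obtain ⟨hP0, -, hPb⟩ := hP
  obtain ⟨hQ0, hQb, -⟩ := hQ
  have hbt0 (j : Fin m) : 0 ≤ btilde j := by
    rw [hbt]
    split_ifs with h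
    exacts [h.le, zero_le_one]
  have hPle (i : Fin n) (j : Fin m) : P i j ≤ b j :=
    hPb j ▸ Finset.single_le_sum (fun i _ => hP0 i j) (Finset.mem_univ i)
  have hQle (j : Fin m) (k : Fin u) : Q j k ≤ b j :=
    hQb j ▸ Finset.single_le_sum (fun k _ => hQ0 j k) (Finset.mem_univ k)
  have hPmarg (i : Fin n) (j : Fin m) : ∑ k, P i j * Q j k / btilde j = P i j := by
    rw [← Finset.sum_div, ← Finset.mul_sum, hQb, hbt]
    exact mul_div_ite_pos_eq_self (hP0 i j) (hPle i j)
  have hQmarg (j : Fin m) (k : Fin u) : ∑ i, P i j * Q j k / btilde j = Q j k := by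
    rw [← Finset.sum_div, ← Finset.sum_mul, hPb, hbt, mul_comm]
    exact mul_div_ite_pos_eq_self (hQ0 j k) (hQle j k)
  let w : Fin L × Fin n × Fin m × Fin u → ℝ := fun q =>
    α q.1 * (P q.2.1 q.2.2.1 * Q q.2.2.1 q.2.2.2 / btilde q.2.2.1)
  have hw (q) : 0 ≤ w q :=
    mul_nonneg (hα.1 _) (div_nonneg (mul_nonneg (hP0 _ _) (hQ0 _ _)) (hbt0 _))
  have hxz : ∑ ℓ, α ℓ * ∑ i, ∑ k, S i k * dist (x i ℓ) (z k ℓ) ^ p =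
      ∑ q, w q * dist (x q.2.1 q.1) (z q.2.2.2 q.1) ^ p := by
    simp only [w, Fintype.sum_prod_type, mul_assoc, ← Finset.mul_sum, hS, Finset.sum_mul]
    refine Finset.sum_congr rfl fun ℓ _ => congrArg _ (Finset.sum_congr rfl fun i _ => ?_)
    exact Finset.sum_comm
  have hxy : ∑ ℓ, α ℓ * ∑ i, ∑ j, P i j * dist (x i ℓ) (y j ℓ) ^ p =
      ∑ q, w q * dist (x q.2.1 q.1) (y q.2.2.1 q.1) ^ p := by
    simp only [w, Fintype.sum_prod_type, mul_assoc (α _), ← Finset.mul_sum]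
    refine Finset.sum_congr rfl fun ℓ _ => congrArg _ (Finset.sum_congr rfl fun i _ =>
      Finset.sum_congr rfl fun j _ => ?_)
    exact ((Finset.sum_mul ..).symm.trans
      (congrArg (· * dist (x i ℓ) (y j ℓ) ^ p) (hPmarg i j))).symm
  have hyz : ∑ ℓ, α ℓ * ∑ j, ∑ k, Q j k * dist (y j ℓ) (z k ℓ) ^ p =
      ∑ q, w q * dist (y q.2.2.1 q.1) (z q.2.2.2 q.1) ^ p := by
    simp only [w, Fintype.sum_prod_type, mul_assoc (α _), ← Finset.mul_sum]
    refine Finset.sum_congr rfl fun ℓ _ => congrArg _ ?_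
    symm
    rw [Finset.sum_comm]
    refine Finset.sum_congr rfl fun j _ => ?_
    rw [Finset.sum_comm]
    refine Finset.sum_congr rfl fun k _ => ?_
    exact (Finset.sum_mul ..).symm.trans
      (congrArg (· * dist (y j ℓ) (z k ℓ) ^ p) (hQmarg j k))
  rw [hxz, hxy, hyz]
  refine le_trans (Real.rpow_le_rpow ?_ (Finset.sum_le_sum fun q _ => ?_) (by positivity))
    (weighted_Lp_add_le Finset.univ hp hw (fun _ => dist_nonneg) (fun _ => dist_nonneg))
  · exact Finset.sum_nonneg fun q _ => mul_nonneg (hw q) (by positivity)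
  · exact mul_le_mul_of_nonneg_left
      (Real.rpow_le_rpow dist_nonneg (dist_triangle _ _ _) (by positivity)) (hw q)
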